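/- Let μ = ESN₂(ω,α,τ) with ω ∈ (−1,1), α = (α₁,α₂) ∈ ℝ², τ ∈ ℝ, and suppose α₁* < 0 and α₂* ≥ 0. Then lim_{x→∞} μ{y ∈ ℝ² : y₂ ≥ x and y₁ ≥ x/ᾱ₁} / μ{y ∈ ℝ² : y₁ ≥ x/ᾱ₁} = 0. -/

import Mathlib

/-!
Both probabilities are compared on the exponential scale. Write `Q` for the quadratic form
`(y₁² - 2ωy₁y₂ + y₂²)/(1-ω²)` of the Gaussian factor and `c = 1/ᾱ₁`.

* Numerator: the factor `Φ` is bounded, and since `ω < c ≤ 1` the gradient of `Q` at the corner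
  `(cx, x)` has positive coordinates. Hence `Q(y) ≥ Q(cx, x) + Q(y - (cx, x))` on the quadrant above
  the corner, and the numerator is `O(exp(-q x²/2))` with `q = Q(c, 1) = 1 + (c-ω)²/(1-ω²) > 1`
  (`quad_ge_corner`, `esn2_quadrant_le`).
* Denominator: `Φ(t) ≥ φ(|t|+1)`, so near a point `xp` the density is of order
  `exp(-(Q(p) + (α·p)²)x²/2)` up to a factor `exp(-εx²/2)`. Minimising `Q(p) + (α·p)²` subject to
  `p₁ = c` gives `c²(1+α₁*²) = 1`; integrating over a unit square at the minimiser bounds the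
  denominator below by a multiple of `exp(-(1+ε)x²/2)` for every `ε > 0`
  (`exists_quad_add_sq_eq_one`, `esn2_box_ge`).

Taking `1 + ε < q`, the ratio tends to zero. The sign hypotheses enter only in the strict inequality
`ω < c` (`omega_lt_inv_abar`).
-/

open MeasureTheory Filter Matrix

/-- standard normal density -/
noncomputable def stdPdf (t : ℝ) : ℝ := Real.exp (-t^2/2) / Real.sqrt (2*Real.pi)

/-- standard normal cdf Φ -/
noncomputable def stdCdf (x : ℝ) : ℝ := ∫ t in Set.Iic x, stdPdf t

/-- univariate extended skew-normal cdf Φ_{α,τ} -/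
noncomputable def esnCdf (α τ x : ℝ) : ℝ :=
  ∫ t in Set.Iic x, stdPdf t * stdCdf (α*t+τ) / stdCdf (τ / Real.sqrt (1+α^2))

/-- bivariate standard normal density with correlation ω -/
noncomputable def phi2 (ω : ℝ) (x : ℝ × ℝ) : ℝ :=
  Real.exp (-(x.1^2 - 2*ω*x.1*x.2 + x.2^2)/(2*(1-ω^2))) / (2*Real.pi*Real.sqrt (1-ω^2))

/-- bivariate extended skew-normal density -/
noncomputable def esn2Density (ω a1 a2 τ : ℝ) (x : ℝ × ℝ) : ℝ :=
  phi2 ω x * stdCdf (a1*x.1 + a2*x.2 + τ) / stdCdf (τ / Real.sqrt (1 + a1^2 + a2^2 + 2*ω*a1*a2))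

/-- bivariate extended skew-normal distribution ESN₂(ω,α,τ) -/
noncomputable def esn2 (ω a1 a2 τ : ℝ) : Measure (ℝ × ℝ) :=
  volume.withDensity (fun x => ENNReal.ofReal (esn2Density ω a1 a2 τ x))

/-- marginal slant parameter α_j*; `aj` is α_j and `ak` is α_{3-j} -/
noncomputable def astar (ω aj ak : ℝ) : ℝ := (aj + ω*ak) / Real.sqrt (1 + ak^2*(1-ω^2))

/-- marginal extension parameter τ_j*; `ak` is α_{3-j} -/
noncomputable def tstar (ω ak τ : ℝ) : ℝ := τ / Real.sqrt (1 + ak^2*(1-ω^2))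

/-- ᾱ_j = √(1+α_j*²); `aj` is α_j and `ak` is α_{3-j} -/
noncomputable def abar (ω aj ak : ℝ) : ℝ := Real.sqrt (1 + (astar ω aj ak)^2)

/-- Quadratic form of the inverse of the correlation matrix with off-diagonal entry `ω`, so that
`phi2 ω` is a constant multiple of `exp (-quad ω / 2)`. -/
noncomputable def quad (ω : ℝ) (y : ℝ × ℝ) : ℝ := (y.1^2 - 2*ω*y.1*y.2 + y.2^2)/(1-ω^2)

lemma one_sub_sq_pos {ω : ℝ} (hω : ω ∈ Set.Ioo (-1 : ℝ) 1) : 0 < 1 - ω^2 := by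
  nlinarith [hω.1, hω.2]

lemma phi2_eq (ω : ℝ) (y : ℝ × ℝ) :
    phi2 ω y = Real.exp (-(quad ω y)/2) / (2*Real.pi*Real.sqrt (1-ω^2)) := by
  unfold phi2 quad
  congr 2
  rw [neg_div, neg_div, div_div, mul_comm 2 (1-ω^2)]

lemma phi2_pos {ω : ℝ} (hω : ω ∈ Set.Ioo (-1 : ℝ) 1) (y : ℝ × ℝ) : 0 < phi2 ω y := by
  have := one_sub_sq_pos hω
  unfold phi2
  positivity

/-! ### The standard normal cdf -/

lemma stdPdf_pos (t : ℝ) : 0 < stdPdf t := by unfold stdPdf; positivity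

lemma integrable_stdPdf : Integrable stdPdf := by
  have h := (integrable_exp_neg_mul_sq (b := 1/2) (by norm_num)).div_const (Real.sqrt (2*Real.pi))
  refine h.congr (Eventually.of_forall fun t => ?_)
  simp only [stdPdf]
  congr 2
  ring

lemma stdPdf_abs_add_one_le_stdCdf (t : ℝ) : stdPdf (|t| + 1) ≤ stdCdf t := by
  have hsub : Set.Icc (t-1) t ⊆ Set.Iic t := fun u hu => hu.2
  have h1 : ∫ u in Set.Icc (t-1) t, stdPdf (|t|+1) ≤ ∫ u in Set.Icc (t-1) t, stdPdf u := by
    refine setIntegral_mono_on (integrable_const _) integrable_stdPdf.integrableOn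
      measurableSet_Icc fun u hu => ?_
    have h3 : |u| ≤ |t| + 1 := by
      rw [abs_le]
      constructor <;> linarith [hu.1, hu.2, le_abs_self t, neg_abs_le t]
    have h4 : u^2 ≤ (|t|+1)^2 := by
      rw [← sq_abs u]
      gcongr
    unfold stdPdf
    gcongr
  have h2 : ∫ u in Set.Icc (t-1) t, stdPdf u ≤ ∫ u in Set.Iic t, stdPdf u :=
    setIntegral_mono_set integrable_stdPdf.integrableOn
      (Eventually.of_forall fun u => (stdPdf_pos u).le) (LE.le.eventuallyLE hsub)
  have h5 : ∫ u in Set.Icc (t-1) t, stdPdf (|t|+1) = stdPdf (|t|+1) := by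
    simp [Measure.real]
  rw [h5] at h1
  exact h1.trans h2

lemma stdCdf_pos (t : ℝ) : 0 < stdCdf t :=
  (stdPdf_pos _).trans_le (stdPdf_abs_add_one_le_stdCdf t)

lemma stdCdf_le (t : ℝ) : stdCdf t ≤ ∫ u, stdPdf u :=
  setIntegral_le_integral integrable_stdPdf (Eventually.of_forall fun u => (stdPdf_pos u).le)

/-! ### The quadratic form -/

/-- Completing squares: `2(1-ω²)Q(y) - (1-ω²)(y₁²+y₂²) = (y₁-ωy₂)² + (y₂-ωy₁)²`. -/
lemma quad_ge {ω : ℝ} (hω : ω ∈ Set.Ioo (-1 : ℝ) 1) (y : ℝ × ℝ) :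
    (y.1^2 + y.2^2)/2 ≤ quad ω y := by
  have := one_sub_sq_pos hω
  unfold quad
  rw [div_le_div_iff₀ (by norm_num) this]
  nlinarith [sq_nonneg (y.1 - ω*y.2), sq_nonneg (y.2 - ω*y.1)]

/-- Expansion of `Q` around the corner `(cx, x)`: the cross term is nonnegative on the quadrant
because `ω ≤ c` and `ω c ≤ 1`. -/
lemma quad_ge_corner {ω : ℝ} (hω : ω ∈ Set.Ioo (-1 : ℝ) 1) {c x : ℝ} (hc : ω ≤ c) (hc1 : c ≤ 1)
    (hc0 : 0 < c) (hx : 0 ≤ x) {y : ℝ × ℝ} (hy1 : c * x ≤ y.1) (hy2 : x ≤ y.2) :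
    (1 + (c-ω)^2/(1-ω^2)) * x^2 + quad ω (y - (c*x, x)) ≤ quad ω y := by
  have h := one_sub_sq_pos hω
  have hωc : 0 ≤ 1 - ω*c := by nlinarith [hω.1, hω.2]
  have key : quad ω y - ((1 + (c-ω)^2/(1-ω^2)) * x^2 + quad ω (y - (c*x, x)))
      = 2 * ((c-ω)*x*(y.1-c*x) + (1-ω*c)*x*(y.2-x)) / (1-ω^2) := by
    unfold quad
    simp only [Prod.fst_sub, Prod.snd_sub]
    field_simp
    ring
  have hpos : 0 ≤ 2 * ((c-ω)*x*(y.1-c*x) + (1-ω*c)*x*(y.2-x)) / (1-ω^2) := by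
    have e1 : 0 ≤ c - ω := by linarith
    have e2 : 0 ≤ y.1 - c*x := by linarith
    have e3 : 0 ≤ y.2 - x := by linarith
    positivity
  linarith

lemma quad_nonneg {ω : ℝ} (hω : ω ∈ Set.Ioo (-1 : ℝ) 1) (y : ℝ × ℝ) : 0 ≤ quad ω y :=
  le_trans (by positivity) (quad_ge hω y)

lemma sq_add_le {ε : ℝ} (hε : 0 < ε) (a b : ℝ) :
    (a+b)^2 ≤ (1+ε)*a^2 + (1+1/ε)*b^2 := by
  have h : (1+ε)*a^2 + (1+1/ε)*b^2 - (a+b)^2 = (ε*a - b)^2/ε := by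
    field_simp
    ring
  have : 0 ≤ (ε*a - b)^2/ε := by positivity
  linarith

lemma quad_add_le {ω : ℝ} (hω : ω ∈ Set.Ioo (-1 : ℝ) 1) {ε : ℝ} (hε : 0 < ε) (v w : ℝ × ℝ) :
    quad ω (v + w) ≤ (1+ε)*quad ω v + (1+1/ε)*quad ω w := by
  have h := one_sub_sq_pos hω
  have h1 : (1+ε)*quad ω v + (1+1/ε)*quad ω w - quad ω (v + w)
      = quad ω (ε*v.1 - w.1, ε*v.2 - w.2) / ε := by
    unfold quad
    simp only [Prod.fst_add, Prod.snd_add]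
    field_simp
    ring
  have : 0 ≤ quad ω (ε*v.1 - w.1, ε*v.2 - w.2) / ε := div_nonneg (quad_nonneg hω _) hε.le
  linarith

/-! ### The tilting constant `1/ᾱ₁` -/

lemma slant_den_pos {ω : ℝ} (hω : ω ∈ Set.Ioo (-1 : ℝ) 1) (a : ℝ) : 0 < 1 + a^2*(1-ω^2) := by
  have := one_sub_sq_pos hω
  positivity

lemma abar_pos (ω a1 a2 : ℝ) : 0 < abar ω a1 a2 := by unfold abar; positivity

lemma inv_abar_sq_mul (ω a1 a2 : ℝ) :
    (1/abar ω a1 a2)^2 * (1 + (astar ω a1 a2)^2) = 1 := by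
  unfold abar
  rw [div_pow, Real.sq_sqrt (by positivity)]
  field_simp

lemma inv_abar_le_one (ω a1 a2 : ℝ) : 1/abar ω a1 a2 ≤ 1 := by
  rw [div_le_one (abar_pos ω a1 a2)]
  unfold abar
  rw [Real.one_le_sqrt]
  nlinarith [sq_nonneg (astar ω a1 a2)]

lemma astar_sq {ω : ℝ} (hω : ω ∈ Set.Ioo (-1 : ℝ) 1) (a1 a2 : ℝ) :
    (astar ω a1 a2)^2 = (a1 + ω*a2)^2 / (1 + a2^2*(1-ω^2)) := by
  unfold astar
  rw [div_pow, Real.sq_sqrt (slant_den_pos hω a2).le]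

/-- The sign conditions give `0 > ω(α₁+ωα₂) ≥ -(1-ω²)α₂` when `ω > 0`; squaring yields
`ω²ᾱ₁² < 1`. -/
lemma omega_lt_inv_abar {ω : ℝ} (hω : ω ∈ Set.Ioo (-1 : ℝ) 1) {a1 a2 : ℝ}
    (h1 : astar ω a1 a2 < 0) (h2 : 0 ≤ astar ω a2 a1) : ω < 1/abar ω a1 a2 := by
  have hab := abar_pos ω a1 a2
  rcases le_or_gt ω 0 with h0 | h0
  · exact h0.trans_lt (by positivity)
  have hd := one_sub_sq_pos hω
  have hS := slant_den_pos hω a2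
  have hβ : a1 + ω*a2 < 0 := by
    by_contra! hcon
    exact absurd h1 (not_lt.2 (div_nonneg hcon (Real.sqrt_nonneg _)))
  have hγ : 0 ≤ a2 + ω*a1 := by
    by_contra! hcon
    exact absurd h2 (not_le.2 (div_neg_of_neg_of_pos hcon (Real.sqrt_pos.2 (slant_den_pos hω a1))))
  have hle : (-(ω*(a1+ω*a2)))^2 ≤ ((1-ω^2)*a2)^2 := by
    apply pow_le_pow_left₀
    · nlinarith
    · nlinarith
  rw [lt_div_iff₀ hab]
  unfold abar
  refine lt_of_pow_lt_pow_left₀ 2 zero_le_one ?_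
  rw [mul_pow, Real.sq_sqrt (by positivity), astar_sq hω]
  have e : 1 - ω^2*(1 + (a1+ω*a2)^2/(1 + a2^2*(1-ω^2)))
      = ((1-ω^2)*(1 + a2^2*(1-ω^2)) - (ω*(a1+ω*a2))^2)/(1 + a2^2*(1-ω^2)) := by
    field_simp
    ring
  have : 0 < ((1-ω^2)*(1 + a2^2*(1-ω^2)) - (ω*(a1+ω*a2))^2)/(1 + a2^2*(1-ω^2)) := by
    apply div_pos _ hS
    nlinarith
  linarith

lemma exists_quad_add_sq_eq_one {ω : ℝ} (hω : ω ∈ Set.Ioo (-1 : ℝ) 1) (a1 a2 : ℝ) :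
    ∃ m : ℝ, quad ω (1/abar ω a1 a2, m) + (a1*(1/abar ω a1 a2) + a2*m)^2 = 1 := by
  have hd := one_sub_sq_pos hω
  have hS := slant_den_pos hω a2
  have key := inv_abar_sq_mul ω a1 a2
  rw [astar_sq hω] at key
  generalize 1/abar ω a1 a2 = c at key ⊢
  obtain ⟨S, hSdef⟩ : ∃ S, S = 1 + a2^2*(1-ω^2) := ⟨_, rfl⟩
  rw [← hSdef] at hS key
  -- minimiser over `m` of the left-hand side
  refine ⟨ω*c - (1-ω^2)*(a2*(a1+ω*a2)*c/S), ?_⟩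
  have e1 : quad ω (c, ω*c - (1-ω^2)*(a2*(a1+ω*a2)*c/S))
      = c^2 + (S-1)*(a1+ω*a2)^2*c^2/S^2 := by
    have e : ∀ t, quad ω (c, ω*c - (1-ω^2)*t) = c^2 + (1-ω^2)*t^2 := fun t => by
      unfold quad
      field_simp
      ring
    rw [e, show S - 1 = a2^2*(1-ω^2) by linarith]
    ring
  have e2 : a1*c + a2*(ω*c - (1-ω^2)*(a2*(a1+ω*a2)*c/S)) = (a1+ω*a2)*c/S := by
    have e : a2^2*(1-ω^2) = S - 1 := by linarith
    calc _ = (a1+ω*a2)*c - a2^2*(1-ω^2)*((a1+ω*a2)*c/S) := by ring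
      _ = _ := by
        rw [e]
        field_simp
        ring
  rw [e1, e2]
  refine Eq.trans ?_ key
  field_simp
  ring

/-! ### The two tail bounds -/

lemma lintegral_exp_quad_lt_top {ω : ℝ} (hω : ω ∈ Set.Ioo (-1 : ℝ) 1) :
    ∫⁻ y : ℝ × ℝ, ENNReal.ofReal (Real.exp (-(quad ω y)/2)) < ⊤ := by
  have h1 : Integrable fun t : ℝ => Real.exp (-(1/4)*t^2) :=
    integrable_exp_neg_mul_sq (by norm_num)
  refine lt_of_le_of_lt (lintegral_mono fun y => ?_) (h1.mul_prod h1).lintegral_lt_top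
  apply ENNReal.ofReal_le_ofReal
  rw [← Real.exp_add]
  apply Real.exp_le_exp.2
  linarith [quad_ge hω y]

/-- The density is dominated by a multiple of the Gaussian kernel. -/
lemma exists_density_le {ω : ℝ} (hω : ω ∈ Set.Ioo (-1 : ℝ) 1) (a1 a2 τ : ℝ) :
    ∃ C : ℝ, 0 ≤ C ∧ ∀ y, esn2Density ω a1 a2 τ y ≤ C * Real.exp (-(quad ω y)/2) := by
  have hd := one_sub_sq_pos hω
  have hN := stdCdf_pos (τ / Real.sqrt (1 + a1^2 + a2^2 + 2*ω*a1*a2))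
  have hM : 0 ≤ ∫ u, stdPdf u := integral_nonneg fun u => (stdPdf_pos u).le
  refine ⟨(∫ u, stdPdf u) / (2*Real.pi*Real.sqrt (1-ω^2)) /
    stdCdf (τ / Real.sqrt (1 + a1^2 + a2^2 + 2*ω*a1*a2)), by positivity, fun y => ?_⟩
  calc esn2Density ω a1 a2 τ y
      ≤ phi2 ω y * (∫ u, stdPdf u) / stdCdf (τ / Real.sqrt (1 + a1^2 + a2^2 + 2*ω*a1*a2)) := by
        unfold esn2Density
        have := (phi2_pos hω y).le
        gcongr
        exact stdCdf_le _
    _ = _ := by rw [phi2_eq]; ring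

lemma esn2_univ_lt_top {ω : ℝ} (hω : ω ∈ Set.Ioo (-1 : ℝ) 1) (a1 a2 τ : ℝ) :
    esn2 ω a1 a2 τ Set.univ < ⊤ := by
  obtain ⟨C, hC, hle⟩ := exists_density_le hω a1 a2 τ
  unfold esn2
  rw [withDensity_apply _ MeasurableSet.univ, Measure.restrict_univ]
  calc _ ≤ ∫⁻ y : ℝ × ℝ, ENNReal.ofReal C * ENNReal.ofReal (Real.exp (-(quad ω y)/2)) := by
        refine lintegral_mono fun y => ?_
        rw [← ENNReal.ofReal_mul hC]
        exact ENNReal.ofReal_le_ofReal (hle y)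
    _ = ENNReal.ofReal C * ∫⁻ y : ℝ × ℝ, ENNReal.ofReal (Real.exp (-(quad ω y)/2)) :=
        lintegral_const_mul' _ _ ENNReal.ofReal_ne_top
    _ < ⊤ := ENNReal.mul_lt_top ENNReal.ofReal_lt_top (lintegral_exp_quad_lt_top hω)

lemma esn2_quadrant_le {ω : ℝ} (hω : ω ∈ Set.Ioo (-1 : ℝ) 1) (a1 a2 τ : ℝ) {c : ℝ} (hc : ω ≤ c)
    (hc1 : c ≤ 1) (hc0 : 0 < c) :
    ∃ C : ℝ, 0 ≤ C ∧ ∀ x : ℝ, 0 ≤ x →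
      ((esn2 ω a1 a2 τ) {y : ℝ × ℝ | x ≤ y.2 ∧ c * x ≤ y.1}).toReal
        ≤ C * Real.exp (-((1 + (c-ω)^2/(1-ω^2)) * x^2)/2) := by
  obtain ⟨C, hC, hle⟩ := exists_density_le hω a1 a2 τ
  set I := ∫⁻ y : ℝ × ℝ, ENNReal.ofReal (Real.exp (-(quad ω y)/2)) with hI
  have hItop : I ≠ ⊤ := (lintegral_exp_quad_lt_top hω).ne
  refine ⟨C * I.toReal, by positivity, fun x hx => ?_⟩
  set q := 1 + (c-ω)^2/(1-ω^2)
  have hS : MeasurableSet {y : ℝ × ℝ | x ≤ y.2 ∧ c * x ≤ y.1} :=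
    (measurableSet_le measurable_const measurable_snd).inter
      (measurableSet_le measurable_const measurable_fst)
  have hmain : (esn2 ω a1 a2 τ) {y : ℝ × ℝ | x ≤ y.2 ∧ c * x ≤ y.1}
      ≤ ENNReal.ofReal (C * Real.exp (-(q * x^2)/2)) * I := by
    unfold esn2
    rw [withDensity_apply _ hS]
    calc _ ≤ ∫⁻ y in {y : ℝ × ℝ | x ≤ y.2 ∧ c * x ≤ y.1},
            ENNReal.ofReal (C * Real.exp (-(q * x^2)/2)) *
              ENNReal.ofReal (Real.exp (-(quad ω (y - (c*x, x)))/2)) := by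
          refine setLIntegral_mono' hS fun y hy => ?_
          rw [← ENNReal.ofReal_mul (by positivity)]
          apply ENNReal.ofReal_le_ofReal
          refine (hle y).trans ?_
          rw [mul_assoc, ← Real.exp_add]
          gcongr
          linarith [quad_ge_corner hω hc hc1 hc0 hx hy.2 hy.1]
      _ ≤ ∫⁻ y : ℝ × ℝ, ENNReal.ofReal (C * Real.exp (-(q * x^2)/2)) *
              ENNReal.ofReal (Real.exp (-(quad ω (y - (c*x, x)))/2)) :=
          setLIntegral_le_lintegral _ _
      _ = ENNReal.ofReal (C * Real.exp (-(q * x^2)/2)) * I := by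
          rw [lintegral_const_mul' _ _ ENNReal.ofReal_ne_top,
            lintegral_sub_right_eq_self
              (fun y : ℝ × ℝ => ENNReal.ofReal (Real.exp (-(quad ω y)/2)))]
  have h3 := ENNReal.toReal_mono (ENNReal.mul_ne_top ENNReal.ofReal_ne_top hItop) hmain
  rw [ENNReal.toReal_mul, ENNReal.toReal_ofReal (by positivity)] at h3
  linarith

/-- Lower bound for the density on the unit square with lower left corner `x • (c, m)`. -/
lemma exists_density_ge {ω : ℝ} (hω : ω ∈ Set.Ioo (-1 : ℝ) 1) (a1 a2 τ : ℝ) {c m : ℝ}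
    (hp : quad ω (c, m) + (a1*c + a2*m)^2 = 1) {ε : ℝ} (hε : 0 < ε) :
    ∃ C : ℝ, 0 < C ∧ ∀ (x : ℝ) (y : ℝ × ℝ), y ∈ Set.Icc (c*x) (c*x+1) ×ˢ Set.Icc (m*x) (m*x+1) →
      C * Real.exp (-((1+ε)*x^2)/2) ≤ esn2Density ω a1 a2 τ y := by
  have hd := one_sub_sq_pos hω
  have hN := stdCdf_pos (τ / Real.sqrt (1 + a1^2 + a2^2 + 2*ω*a1*a2))
  set N := stdCdf (τ / Real.sqrt (1 + a1^2 + a2^2 + 2*ω*a1*a2)) with hNdef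
  -- the constant collects the bounded contributions of the displacement within the square
  set L := (1+1/ε)*(4/(1-ω^2)) + (1+1/ε)*(|a1|+|a2|+|τ|+1)^2 with hL
  refine ⟨Real.exp (-L/2) / (2*Real.pi*Real.sqrt (1-ω^2)) / Real.sqrt (2*Real.pi) / N,
    by positivity, fun x y hy => ?_⟩
  obtain ⟨⟨hy1, hy1'⟩, hy2, hy2'⟩ := hy
  obtain ⟨s, hs⟩ : ∃ s, s = y.1 - c*x := ⟨_, rfl⟩
  obtain ⟨r, hr⟩ : ∃ r, r = y.2 - m*x := ⟨_, rfl⟩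
  have hs0 : 0 ≤ s := by linarith
  have hs1 : s ≤ 1 := by linarith
  have hr0 : 0 ≤ r := by linarith
  have hr1 : r ≤ 1 := by linarith
  have hyeq : y = (c*x, m*x) + (s, r) := by
    ext <;> simp [hs, hr]
  have hscale : quad ω (c*x, m*x) = quad ω (c, m) * x^2 := by
    unfold quad
    simp only
    ring
  have hQw : quad ω (s, r) ≤ 4/(1-ω^2) := by
    unfold quad
    simp only
    gcongr
    have h1 : s*r ≤ 1 := by nlinarith
    have h2 : 0 ≤ s*r := by positivity
    nlinarith [hω.1, hω.2]
  have hQ : quad ω y ≤ (1+ε)*(quad ω (c, m) * x^2) + (1+1/ε)*(4/(1-ω^2)) := by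
    rw [hyeq, ← hscale]
    refine (quad_add_le hω hε _ _).trans ?_
    gcongr
  have hT : (|a1*y.1 + a2*y.2 + τ| + 1)^2
      ≤ (1+ε)*((a1*c + a2*m)^2*x^2) + (1+1/ε)*(|a1|+|a2|+|τ|+1)^2 := by
    have e1 : |a1*y.1 + a2*y.2 + τ| ≤ |(a1*c+a2*m)*x| + (|a1|+|a2|+|τ|) := by
      have e : a1*y.1 + a2*y.2 + τ = (a1*c+a2*m)*x + (a1*s + a2*r + τ) := by
        rw [hs, hr]; ring
      rw [e]
      refine (abs_add_le _ _).trans ?_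
      gcongr
      refine (abs_add_three _ _ _).trans ?_
      rw [abs_mul, abs_mul, abs_of_nonneg hs0, abs_of_nonneg hr0]
      have f1 := mul_le_of_le_one_right (abs_nonneg a1) hs1
      have f2 := mul_le_of_le_one_right (abs_nonneg a2) hr1
      linarith
    calc (|a1*y.1 + a2*y.2 + τ| + 1)^2
        ≤ (|(a1*c+a2*m)*x| + (|a1|+|a2|+|τ|+1))^2 := by
          refine pow_le_pow_left₀ (by positivity) ?_ 2
          linarith
      _ ≤ _ := by
          refine (sq_add_le hε _ _).trans ?_
          rw [sq_abs, mul_pow]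
  have hsum : quad ω y + (|a1*y.1 + a2*y.2 + τ| + 1)^2 ≤ (1+ε)*x^2 + L := by
    have e : (1+ε)*(quad ω (c, m) * x^2) + (1+ε)*((a1*c + a2*m)^2*x^2) = (1+ε)*x^2 := by
      rw [← mul_add, ← add_mul, hp, one_mul]
    linarith
  calc Real.exp (-L/2) / (2*Real.pi*Real.sqrt (1-ω^2)) / Real.sqrt (2*Real.pi) / N
        * Real.exp (-((1+ε)*x^2)/2)
      = Real.exp (-((1+ε)*x^2 + L)/2) / (2*Real.pi*Real.sqrt (1-ω^2)) / Real.sqrt (2*Real.pi) / N := by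
        rw [show -((1+ε)*x^2 + L)/2 = -L/2 + -((1+ε)*x^2)/2 by ring, Real.exp_add]
        ring
    _ ≤ Real.exp (-(quad ω y + (|a1*y.1 + a2*y.2 + τ| + 1)^2)/2)
          / (2*Real.pi*Real.sqrt (1-ω^2)) / Real.sqrt (2*Real.pi) / N := by
        gcongr
    _ = phi2 ω y * stdPdf (|a1*y.1 + a2*y.2 + τ| + 1) / N := by
        rw [phi2_eq]
        unfold stdPdf
        rw [neg_add, add_div, Real.exp_add]
        ring
    _ ≤ esn2Density ω a1 a2 τ y := by
        unfold esn2Density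
        have := (phi2_pos hω y).le
        rw [← hNdef]
        gcongr
        exact stdPdf_abs_add_one_le_stdCdf _

lemma esn2_box_ge {ω : ℝ} (hω : ω ∈ Set.Ioo (-1 : ℝ) 1) (a1 a2 τ : ℝ) {c m : ℝ}
    (hp : quad ω (c, m) + (a1*c + a2*m)^2 = 1) {ε : ℝ} (hε : 0 < ε) :
    ∃ C : ℝ, 0 < C ∧ ∀ x : ℝ, C * Real.exp (-((1+ε)*x^2)/2)
      ≤ ((esn2 ω a1 a2 τ) {y : ℝ × ℝ | c * x ≤ y.1}).toReal := by
  obtain ⟨C, hC, hge⟩ := exists_density_ge hω a1 a2 τ hp hε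
  refine ⟨C, hC, fun x => ?_⟩
  set B := Set.Icc (c*x) (c*x+1) ×ˢ Set.Icc (m*x) (m*x+1) with hB
  have hBm : MeasurableSet B := measurableSet_Icc.prod measurableSet_Icc
  have hvol : volume B = 1 := by
    rw [hB, Measure.volume_eq_prod, Measure.prod_prod]
    simp
  have h1 : ENNReal.ofReal (C * Real.exp (-((1+ε)*x^2)/2)) ≤ esn2 ω a1 a2 τ B := by
    unfold esn2
    rw [withDensity_apply _ hBm]
    calc _ = ∫⁻ _ in B, ENNReal.ofReal (C * Real.exp (-((1+ε)*x^2)/2)) := by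
          rw [setLIntegral_const, hvol, mul_one]
      _ ≤ _ := setLIntegral_mono' hBm fun y hy => ENNReal.ofReal_le_ofReal (hge x y hy)
  have h2 : esn2 ω a1 a2 τ B ≤ esn2 ω a1 a2 τ {y : ℝ × ℝ | c * x ≤ y.1} :=
    measure_mono fun y hy => hy.1.1
  have hfin : esn2 ω a1 a2 τ {y : ℝ × ℝ | c * x ≤ y.1} ≠ ⊤ :=
    ((measure_mono (Set.subset_univ _)).trans_lt (esn2_univ_lt_top hω a1 a2 τ)).ne
  exact (ENNReal.ofReal_le_iff_le_toReal hfin).1 (h1.trans h2)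

/-- Lemma 1, case (d): α₁* < 0 and α₂* ≥ 0. -/
theorem esn2_joint_tail_case_d
    (ω : ℝ) (hω : ω ∈ Set.Ioo (-1 : ℝ) 1) (a1 a2 τ : ℝ)
    (h1 : astar ω a1 a2 < 0) (h2 : 0 ≤ astar ω a2 a1) :
    Tendsto (fun x : ℝ =>
        ((esn2 ω a1 a2 τ) {y : ℝ × ℝ | x ≤ y.2 ∧ x / abar ω a1 a2 ≤ y.1}).toReal /
        ((esn2 ω a1 a2 τ) {y : ℝ × ℝ | x / abar ω a1 a2 ≤ y.1}).toReal)
      atTop (nhds 0) := by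
  have hd := one_sub_sq_pos hω
  have hab := abar_pos ω a1 a2
  have hlt := omega_lt_inv_abar hω h1 h2
  have hc1 := inv_abar_le_one ω a1 a2
  obtain ⟨m, hm⟩ := exists_quad_add_sq_eq_one hω a1 a2
  have hc0 : 0 < 1/abar ω a1 a2 := by positivity
  obtain ⟨c, hc⟩ : ∃ c, c = 1/abar ω a1 a2 := ⟨_, rfl⟩
  have hrw : ∀ x : ℝ, x / abar ω a1 a2 = c * x := fun x => by rw [hc]; ring
  simp only [hrw]
  rw [← hc] at hlt hc1 hm hc0
  set δ := (c-ω)^2/(1-ω^2) with hδ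
  have hδ0 : 0 < δ := div_pos (pow_pos (sub_pos.2 hlt) 2) hd
  obtain ⟨C₁, hC₁, hnum⟩ := esn2_quadrant_le hω a1 a2 τ hlt.le hc1 hc0
  obtain ⟨C₂, hC₂, hden⟩ := esn2_box_ge hω a1 a2 τ hm (half_pos hδ0)
  have hlim : Tendsto (fun x : ℝ => C₁/C₂ * Real.exp (-(δ/4 * x^2))) atTop (nhds 0) := by
    have h : Tendsto (fun x : ℝ => δ/4 * x^2) atTop atTop :=
      (tendsto_pow_atTop two_ne_zero).const_mul_atTop (by positivity)
    simpa using (Real.tendsto_exp_neg_atTop_nhds_zero.comp h).const_mul (C₁/C₂)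
  refine squeeze_zero' (Eventually.of_forall fun x => by positivity) ?_ hlim
  filter_upwards [eventually_ge_atTop 0] with x hx
  calc _ ≤ (C₁ * Real.exp (-((1 + δ) * x^2)/2)) / (C₂ * Real.exp (-((1+δ/2)*x^2)/2)) :=
        div_le_div₀ (by positivity) (hnum x hx) (by positivity) (hden x)
    _ = C₁/C₂ * Real.exp (-(δ/4 * x^2)) := by
        rw [mul_div_mul_comm, ← Real.exp_sub]
        congr 2
        ring
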